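/- Let f be a trigonometric polynomial on 𝕋² whose Fourier support S is contained in the annulus {λ−δ < |k| < λ+δ} with λδ ≥ 1, and assume that every cap θ of dimensions δ × (λδ)^{1/2} covering the annulus satisfies #(S ∩ θ ∩ ℤ²) ≤ N. Then ‖f‖_{L⁴(𝕋²)} ≤ C N^{1/4} ‖f‖_{L²(𝕋²)}. -/

import Mathlib

open MeasureTheory

/-- The Euclidean norm on the plane `ℝ × ℝ`. -/
noncomputable def nrm2 (x : ℝ × ℝ) : ℝ := Real.sqrt (x.1 ^ 2 + x.2 ^ 2)

/-- The lattice point `k ∈ ℤ²` as a point of the plane. -/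
noncomputable def ptR (k : ℤ × ℤ) : ℝ × ℝ := ((k.1 : ℝ), (k.2 : ℝ))

/-- The angular coordinate of `x ∈ ℝ²`, normalized to lie in `[0, 2π)`. -/
noncomputable def ang (x : ℝ × ℝ) : ℝ := Complex.arg ((x.1 : ℂ) + (x.2 : ℂ) * Complex.I) + Real.pi

/-- The `j`-th cap: the intersection of the annulus `λ - δ < |x| < λ + δ` with the
angular sector of aperture `(δ/λ)^{1/2}`, so of dimensions roughly `δ × (λδ)^{1/2}`. -/
noncomputable def cap (lam δ : ℝ) (j : ℕ) : Set (ℝ × ℝ) :=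
  {x | (lam - δ < nrm2 x ∧ nrm2 x < lam + δ) ∧
    (j : ℝ) * Real.sqrt (δ / lam) ≤ ang x ∧ ang x < ((j : ℝ) + 1) * Real.sqrt (δ / lam)}

/-- The lattice points in the `j`-th cap. -/
noncomputable def capPts (lam δ : ℝ) (j : ℕ) : Set (ℤ × ℤ) := {k | ptR k ∈ cap lam δ j}

/-- The number of caps needed to cover the annulus. -/
noncomputable def numCaps (lam δ : ℝ) : ℕ := Nat.ceil (2 * Real.pi / Real.sqrt (δ / lam))

/-- The Euclidean distance between two lattice points. -/
noncomputable def distZ (P Q : ℤ × ℤ) : ℝ :=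
  Real.sqrt (((P.1 : ℝ) - Q.1) ^ 2 + ((P.2 : ℝ) - Q.2) ^ 2)

/-- The unit square. -/
noncomputable def unitSq : Set (ℝ × ℝ) := Set.Icc (0 : ℝ) 1 ×ˢ Set.Icc (0 : ℝ) 1

/-- `e(t) = exp(2πit)`. -/
noncomputable def e₂ (t : ℝ) : ℂ := Complex.exp (2 * Real.pi * Complex.I * t)

/-!
Since `‖f‖₄⁴ = ‖f²‖₂²`, Parseval and Cauchy–Schwarz reduce the estimate to bounding, for each `n`,
the number of ways to write `n = k + l` with `k` and `l` in the support. Splitting the support into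
boundedly many sectors of aperture `π / 2` excludes nearly antipodal pairs, so that `|k + l| ≳ λ`.
If then `k + l = p + q`, all four points being in the annulus, the vectors `k - p` and `k - q` are
nearly orthogonal to `k + l` and nearly orthogonal to each other. In the plane this forces one of
them to have length `O((λδ)^{1/2})`, so `k` lies in one of boundedly many caps around `p` or `q`.
-/

open Complex ComplexConjugate Finset
open scoped Pointwise Real

section OrthonormalCharacters

variable {X G : Type*} [MeasurableSpace X] [AddGroup G] [DecidableEq G]

/-- A family `φ` of functions on `(X, μ)`, indexed by an additive group, that is multiplicative in
its index and orthonormal in `L²(μ)`; the model is the family of characters of a torus. As no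
measurability of the `φ m` is demanded, integrability of the products is a separate field. -/
structure IsOrthonormalCharFamily (φ : G → X → ℂ) (μ : Measure X) : Prop where
  map_add (m n : G) (x : X) : φ (m + n) x = φ m x * φ n x
  integrable_mul_conj (m n : G) : Integrable (fun x ↦ φ m x * conj (φ n x)) μ
  integral_mul_conj (m n : G) : ∫ x, φ m x * conj (φ n x) ∂μ = if m = n then 1 else 0

/-- The `n`-th Fourier coefficient of the square of `∑ k ∈ T, a k * φ k`, that is, the convolution
of `a` (restricted to `T`) with itself. -/
def selfConv (T : Finset G) (a : G → ℂ) (n : G) : ℂ :=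
  ∑ p ∈ T ×ˢ T with p.1 + p.2 = n, a p.1 * a p.2

lemma norm_selfConv_sq_le (T : Finset G) (a : G → ℂ) (n : G) :
    ‖selfConv T a n‖ ^ 2 ≤
      T.addConvolution T n * ∑ p ∈ T ×ˢ T with p.1 + p.2 = n, ‖a p.1‖ ^ 2 * ‖a p.2‖ ^ 2 :=
  calc ‖selfConv T a n‖ ^ 2
      ≤ (∑ p ∈ T ×ˢ T with p.1 + p.2 = n, ‖a p.1 * a p.2‖) ^ 2 := by
        gcongr
        exact norm_sum_le _ _
    _ ≤ T.addConvolution T n * ∑ p ∈ T ×ˢ T with p.1 + p.2 = n, ‖a p.1 * a p.2‖ ^ 2 :=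
        sq_sum_le_card_mul_sum_sq
    _ = _ := by simp_rw [norm_mul, mul_pow]

lemma sum_norm_selfConv_sq_le {T : Finset G} {M : ℕ} (hM : ∀ n, T.addConvolution T n ≤ M)
    (a : G → ℂ) :
    ∑ n ∈ T + T, ‖selfConv T a n‖ ^ 2 ≤ M * (∑ k ∈ T, ‖a k‖ ^ 2) ^ 2 :=
  calc ∑ n ∈ T + T, ‖selfConv T a n‖ ^ 2
      ≤ ∑ n ∈ T + T, M * ∑ p ∈ T ×ˢ T with p.1 + p.2 = n, ‖a p.1‖ ^ 2 * ‖a p.2‖ ^ 2 := by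
        refine sum_le_sum fun n _ ↦ (norm_selfConv_sq_le T a n).trans ?_
        gcongr
        exact hM n
    _ = M * ∑ p ∈ T ×ˢ T, ‖a p.1‖ ^ 2 * ‖a p.2‖ ^ 2 := by
        rw [← mul_sum, sum_fiberwise_of_maps_to fun p hp ↦
          add_mem_add (mem_product.1 hp).1 (mem_product.1 hp).2]
    _ = M * (∑ k ∈ T, ‖a k‖ ^ 2) ^ 2 := by rw [sq, sum_mul_sum, sum_product]

lemma ofReal_norm_sum_sq {ι : Type*} (T : Finset ι) (c z : ι → ℂ) :
    ((‖∑ k ∈ T, c k * z k‖ ^ 2 : ℝ) : ℂ) =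
      ∑ k ∈ T, ∑ l ∈ T, c k * conj (c l) * (z k * conj (z l)) := by
  rw [ofReal_pow, ← mul_conj', map_sum, sum_mul_sum]
  simp_rw [map_mul, mul_mul_mul_comm]

namespace IsOrthonormalCharFamily

variable {φ : G → X → ℂ} {μ : Measure X}

lemma integrable_norm_sum_sq (hφ : IsOrthonormalCharFamily φ μ) (T : Finset G) (c : G → ℂ) :
    Integrable (fun x ↦ ‖∑ k ∈ T, c k * φ k x‖ ^ 2) μ := by
  have h : Integrable (fun x ↦ ((‖∑ k ∈ T, c k * φ k x‖ ^ 2 : ℝ) : ℂ)) μ := by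
    simp_rw [ofReal_norm_sum_sq T c]
    exact integrable_finsetSum _ fun k _ ↦ integrable_finsetSum _ fun l _ ↦
      (hφ.integrable_mul_conj k l).const_mul _
  exact h.re

theorem integral_norm_sum_sq (hφ : IsOrthonormalCharFamily φ μ) (T : Finset G) (c : G → ℂ) :
    ∫ x, ‖∑ k ∈ T, c k * φ k x‖ ^ 2 ∂μ = ∑ k ∈ T, ‖c k‖ ^ 2 := by
  have hint (k l : G) : Integrable (fun x ↦ c k * conj (c l) * (φ k x * conj (φ l x))) μ :=
    (hφ.integrable_mul_conj k l).const_mul _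
  apply ofReal_injective
  calc ((∫ x, ‖∑ k ∈ T, c k * φ k x‖ ^ 2 ∂μ : ℝ) : ℂ)
      = ∫ x, ∑ k ∈ T, ∑ l ∈ T, c k * conj (c l) * (φ k x * conj (φ l x)) ∂μ := by
        rw [← integral_complex_ofReal]
        simp_rw [ofReal_norm_sum_sq T c]
    _ = ∑ k ∈ T, ∑ l ∈ T, c k * conj (c l) * (if k = l then 1 else 0) := by
        rw [integral_finsetSum _ fun k _ ↦ integrable_finsetSum _ fun l _ ↦ hint k l]
        simp_rw [integral_finsetSum _ fun l _ ↦ hint _ l, integral_const_mul,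
          hφ.integral_mul_conj]
    _ = ((∑ k ∈ T, ‖c k‖ ^ 2 : ℝ) : ℂ) := by
        push_cast
        refine sum_congr rfl fun k hk ↦ ?_
        simp only [mul_ite, mul_one, mul_zero, sum_ite_eq, if_pos hk, mul_conj']

lemma sum_sq_eq_sum_selfConv (hφ : IsOrthonormalCharFamily φ μ) (T : Finset G) (a : G → ℂ)
    (x : X) : (∑ k ∈ T, a k * φ k x) ^ 2 = ∑ n ∈ T + T, selfConv T a n * φ n x := by
  rw [sq, sum_mul_sum, ← sum_product', ← sum_fiberwise_of_maps_to (t := T + T) fun p hp ↦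
    add_mem_add (mem_product.1 hp).1 (mem_product.1 hp).2]
  refine sum_congr rfl fun n _ ↦ ?_
  rw [selfConv, sum_mul]
  refine sum_congr rfl fun p hp ↦ ?_
  rw [← (mem_filter.1 hp).2, hφ.map_add, mul_mul_mul_comm]

lemma norm_sum_pow_four (hφ : IsOrthonormalCharFamily φ μ) (T : Finset G) (a : G → ℂ) (x : X) :
    ‖∑ k ∈ T, a k * φ k x‖ ^ 4 = ‖∑ n ∈ T + T, selfConv T a n * φ n x‖ ^ 2 := by
  rw [← hφ.sum_sq_eq_sum_selfConv, norm_pow, ← pow_mul]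

lemma integrable_norm_sum_pow_four (hφ : IsOrthonormalCharFamily φ μ) (T : Finset G)
    (a : G → ℂ) : Integrable (fun x ↦ ‖∑ k ∈ T, a k * φ k x‖ ^ 4) μ := by
  simp_rw [hφ.norm_sum_pow_four]
  exact hφ.integrable_norm_sum_sq _ _

theorem integral_norm_sum_pow_four_le (hφ : IsOrthonormalCharFamily φ μ) {T : Finset G} {M : ℕ}
    (hM : ∀ n, T.addConvolution T n ≤ M) (a : G → ℂ) :
    ∫ x, ‖∑ k ∈ T, a k * φ k x‖ ^ 4 ∂μ ≤ M * (∑ k ∈ T, ‖a k‖ ^ 2) ^ 2 := by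
  simp_rw [hφ.norm_sum_pow_four, hφ.integral_norm_sum_sq]
  exact sum_norm_selfConv_sq_le hM a

theorem integral_norm_sum_pow_four_le_of_fiberwise (hφ : IsOrthonormalCharFamily φ μ)
    {ι : Type*} [DecidableEq ι] {S : Finset G} {I : Finset ι} {g : G → ι} {M : ℕ}
    (hg : ∀ k ∈ S, g k ∈ I)
    (hM : ∀ i ∈ I, ∀ n, addConvolution {k ∈ S | g k = i} {k ∈ S | g k = i} n ≤ M) (a : G → ℂ) :
    ∫ x, ‖∑ k ∈ S, a k * φ k x‖ ^ 4 ∂μ ≤ #I ^ 3 * M * (∑ k ∈ S, ‖a k‖ ^ 2) ^ 2 := by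
  let f (i : ι) (x : X) : ℂ := ∑ k ∈ S with g k = i, a k * φ k x
  let A (i : ι) : ℝ := ∑ k ∈ S with g k = i, ‖a k‖ ^ 2
  have hf (i : ι) : Integrable (fun x ↦ ‖f i x‖ ^ 4) μ := hφ.integrable_norm_sum_pow_four _ a
  have hpow (x : X) : ‖∑ k ∈ S, a k * φ k x‖ ^ 4 ≤ #I ^ 3 * ∑ i ∈ I, ‖f i x‖ ^ 4 :=
    calc ‖∑ k ∈ S, a k * φ k x‖ ^ 4 = ‖∑ i ∈ I, f i x‖ ^ 4 := by
          rw [sum_fiberwise_of_maps_to hg]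
      _ ≤ (∑ i ∈ I, ‖f i x‖) ^ 4 := by
          gcongr
          exact norm_sum_le _ _
      _ ≤ #I ^ 3 * ∑ i ∈ I, ‖f i x‖ ^ 4 := by
          exact_mod_cast pow_sum_le_card_mul_sum_pow (fun i _ ↦ norm_nonneg (f i x)) 3
  calc ∫ x, ‖∑ k ∈ S, a k * φ k x‖ ^ 4 ∂μ ≤ ∫ x, #I ^ 3 * ∑ i ∈ I, ‖f i x‖ ^ 4 ∂μ :=
        integral_mono (hφ.integrable_norm_sum_pow_four S a)
          ((integrable_finsetSum _ fun i _ ↦ hf i).const_mul _) hpow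
    _ = #I ^ 3 * ∑ i ∈ I, ∫ x, ‖f i x‖ ^ 4 ∂μ := by
        rw [integral_const_mul, integral_finsetSum _ fun i _ ↦ hf i]
    _ ≤ #I ^ 3 * ∑ i ∈ I, M * A i ^ 2 := by
        gcongr with i hi
        exact hφ.integral_norm_sum_pow_four_le (hM i hi) a
    _ ≤ #I ^ 3 * (M * (∑ i ∈ I, A i) ^ 2) := by
        rw [← mul_sum]
        gcongr
        exact sum_sq_le_sq_sum_of_nonneg fun i _ ↦ by positivity
    _ = #I ^ 3 * M * (∑ k ∈ S, ‖a k‖ ^ 2) ^ 2 := by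
        rw [sum_fiberwise_of_maps_to hg, mul_assoc]

end IsOrthonormalCharFamily

end OrthonormalCharacters

section Torus

/-- The character `x ↦ e(k · x)` of `𝕋²`, as a function on the plane. -/
noncomputable def torusChar (k : ℤ × ℤ) (x : ℝ × ℝ) : ℂ :=
  e₂ ((k.1 : ℝ) * x.1 + (k.2 : ℝ) * x.2)

lemma e₂_add (s t : ℝ) : e₂ (s + t) = e₂ s * e₂ t := by
  simp only [e₂, ofReal_add, mul_add, Complex.exp_add]

lemma conj_e₂ (t : ℝ) : conj (e₂ t) = e₂ (-t) := by
  simp only [e₂, ← exp_conj, map_mul, conj_ofReal, conj_I, map_ofNat, ofReal_neg, mul_neg, neg_mul]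

lemma continuous_e₂ : Continuous e₂ := by
  unfold e₂
  fun_prop

lemma continuous_torusChar (k : ℤ × ℤ) : Continuous (torusChar k) :=
  continuous_e₂.comp (by fun_prop)

lemma torusChar_add (m n : ℤ × ℤ) (x : ℝ × ℝ) :
    torusChar (m + n) x = torusChar m x * torusChar n x := by
  simp only [torusChar, ← e₂_add, Prod.fst_add, Prod.snd_add, Int.cast_add]
  ring_nf

lemma conj_torusChar (k : ℤ × ℤ) (x : ℝ × ℝ) : conj (torusChar k x) = torusChar (-k) x := by
  simp only [torusChar, conj_e₂, Prod.fst_neg, Prod.snd_neg, Int.cast_neg]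
  ring_nf

lemma integral_e₂_int_mul (m : ℤ) :
    ∫ t in Set.Icc (0 : ℝ) 1, e₂ (m * t) = if m = 0 then 1 else 0 := by
  rw [integral_Icc_eq_integral_Ioc, ← intervalIntegral.integral_of_le zero_le_one]
  split_ifs with hm
  · simp [hm, e₂]
  have hc : 2 * π * I * m ≠ 0 := by simp [hm, Real.pi_ne_zero]
  have hexp : exp (2 * π * I * m) = 1 := exp_eq_one_iff.2 ⟨m, mul_comm _ _⟩
  calc ∫ t in (0 : ℝ)..1, e₂ (m * t) = ∫ t in (0 : ℝ)..1, exp (2 * π * I * m * t) := by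
        simp only [e₂, ofReal_mul, ofReal_intCast, mul_assoc]
    _ = 0 := by simp [integral_exp_mul_complex hc, hexp]

lemma integral_torusChar (k : ℤ × ℤ) :
    ∫ x in unitSq, torusChar k x = if k = 0 then 1 else 0 := by
  simp_rw [torusChar, e₂_add, unitSq, Measure.volume_eq_prod]
  rw [setIntegral_prod_mul (fun t : ℝ ↦ e₂ (k.1 * t)) (fun t : ℝ ↦ e₂ (k.2 * t)),
    integral_e₂_int_mul, integral_e₂_int_mul, ite_zero_mul_ite_zero, mul_one]
  simp only [Prod.ext_iff, Prod.fst_zero, Prod.snd_zero]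

theorem isOrthonormalCharFamily_torusChar :
    IsOrthonormalCharFamily torusChar (volume.restrict unitSq) where
  map_add := torusChar_add
  integrable_mul_conj m n :=
    (((continuous_torusChar m).mul (continuous_torusChar n).star).continuousOn).integrableOn_compact
      (isCompact_Icc.prod isCompact_Icc)
  integral_mul_conj m n := by
    simp_rw [conj_torusChar, ← torusChar_add, integral_torusChar, ← sub_eq_add_neg, sub_eq_zero]

end Torus

section PlaneGeometry

lemma re_mul_conj_eq_norm_mul_cos (z w : ℂ) :
    (z * conj w).re = ‖z‖ * ‖w‖ * Real.cos (arg z - arg w) := by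
  rw [Real.cos_sub, mul_re, conj_re, conj_im, ← norm_mul_cos_arg z, ← norm_mul_sin_arg z,
    ← norm_mul_cos_arg w, ← norm_mul_sin_arg w]
  ring

lemma im_mul_conj_eq_norm_mul_sin (z w : ℂ) :
    (z * conj w).im = ‖z‖ * ‖w‖ * Real.sin (arg z - arg w) := by
  rw [Real.sin_sub, mul_im, conj_re, conj_im, ← norm_mul_cos_arg z, ← norm_mul_sin_arg z,
    ← norm_mul_cos_arg w, ← norm_mul_sin_arg w]
  ring

lemma norm_sq_add_norm_sq_le_norm_add_sq {z w : ℂ} (h : |arg z - arg w| ≤ π / 2) :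
    ‖z‖ ^ 2 + ‖w‖ ^ 2 ≤ ‖z + w‖ ^ 2 := by
  have hcos : 0 ≤ Real.cos (arg z - arg w) := Real.cos_nonneg_of_mem_Icc (abs_le.1 h)
  have hre : 0 ≤ (z * conj w).re := by
    rw [re_mul_conj_eq_norm_mul_cos]
    positivity
  simp only [Complex.sq_norm, normSq_add]
  linarith

-- The cross product of `z` and `w` is unchanged when a multiple of `w` is subtracted from `z`.
lemma norm_mul_abs_arg_sub_arg_le {z w : ℂ} (h : |arg z - arg w| ≤ π / 2) :
    ‖z‖ * |arg z - arg w| ≤ π / 2 * ‖z - w‖ := by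
  rcases eq_or_ne w 0 with rfl | hw
  · rw [sub_zero, mul_comm]
    gcongr
  have hcross : ((z - w) * conj w).im = ‖w‖ * (‖z‖ * Real.sin (arg z - arg w)) := by
    rw [sub_mul, sub_im, im_mul_conj_eq_norm_mul_sin, mul_conj, ofReal_im, sub_zero, mul_left_comm,
      mul_assoc]
  have hsin : ‖z‖ * |Real.sin (arg z - arg w)| ≤ ‖z - w‖ := by
    have := abs_im_le_norm ((z - w) * conj w)
    rw [hcross, norm_mul, norm_conj, mul_comm, abs_mul, abs_mul, abs_norm, abs_norm] at this
    exact le_of_mul_le_mul_right (by linarith) (norm_pos_iff.2 hw)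
  calc ‖z‖ * |arg z - arg w| = π / 2 * (‖z‖ * (2 / π * |arg z - arg w|)) := by field_simp
    _ ≤ π / 2 * (‖z‖ * |Real.sin (arg z - arg w)|) := by
        gcongr
        exact Real.mul_abs_le_abs_sin h
    _ ≤ π / 2 * ‖z - w‖ := by gcongr

lemma norm_sq_le_or_norm_sq_le_of_abs_re_le {V W : ℂ} {ε η : ℝ} (hV : |V.re| ≤ ε)
    (hW : |W.re| ≤ ε) (hVW : |(V * conj W).re| ≤ η) :
    ‖V‖ ^ 2 ≤ η + 2 * ε ^ 2 ∨ ‖W‖ ^ 2 ≤ η + 2 * ε ^ 2 := by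
  have him : |V.im| * |W.im| ≤ η + ε ^ 2 :=
    calc |V.im| * |W.im| = |(V * conj W).re - V.re * W.re| := by
          rw [← abs_mul]
          congr 1
          simp only [mul_re, conj_re, conj_im]
          ring
      _ ≤ |(V * conj W).re| + |V.re| * |W.re| := by
          rw [← abs_mul]
          exact abs_sub _ _
      _ ≤ η + ε * ε := by gcongr; exact (abs_nonneg _).trans hV
      _ = η + ε ^ 2 := by rw [sq]
  have hbound {U : ℂ} (hre : |U.re| ≤ ε) (hU : |U.im| * |U.im| ≤ |V.im| * |W.im|) :
      ‖U‖ ^ 2 ≤ η + 2 * ε ^ 2 := by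
    have hre_sq : U.re ^ 2 ≤ ε ^ 2 := sq_le_sq' (abs_le.1 hre).1 (abs_le.1 hre).2
    rw [Complex.sq_norm, normSq_apply, ← abs_mul_abs_self U.im]
    linarith
  rcases le_total |V.im| |W.im| with h | h
  · exact .inl (hbound hV (by gcongr))
  · exact .inr (hbound hW (by gcongr))

lemma re_sub_mul_conj_add {k l p q : ℂ} (h : k + l = p + q) :
    ((k - p) * conj (k + l)).re = (‖k‖ ^ 2 - ‖l‖ ^ 2 - ‖p‖ ^ 2 + ‖q‖ ^ 2) / 2 := by
  obtain rfl : q = k + l - p := by rw [h]; ring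
  simp only [Complex.sq_norm, normSq_apply, mul_re, conj_re, conj_im, add_re, add_im, sub_re,
    sub_im]
  ring

lemma re_sub_mul_conj_sub {k l p q : ℂ} (h : k + l = p + q) :
    ((k - p) * conj (k - q)).re = (‖k‖ ^ 2 + ‖l‖ ^ 2 - ‖p‖ ^ 2 - ‖q‖ ^ 2) / 2 := by
  obtain rfl : q = k + l - p := by rw [h]; ring
  simp only [Complex.sq_norm, normSq_apply, mul_re, conj_re, conj_im, add_re, add_im, sub_re,
    sub_im]
  ring

-- Both `k - p` and `k - q` are nearly orthogonal to `k + l`, hence nearly parallel to each other,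
-- while they are also nearly orthogonal to each other: one of them is small.
theorem norm_sub_sq_le_or_of_add_eq_add {k l p q : ℂ} {R ε : ℝ} (h : k + l = p + q)
    (hk : |‖k‖ ^ 2 - R| ≤ ε) (hl : |‖l‖ ^ 2 - R| ≤ ε) (hp : |‖p‖ ^ 2 - R| ≤ ε)
    (hq : |‖q‖ ^ 2 - R| ≤ ε) :
    ‖k - p‖ ^ 2 * ‖k + l‖ ^ 2 ≤ 2 * ε * ‖k + l‖ ^ 2 + 8 * ε ^ 2 ∨
      ‖k - q‖ ^ 2 * ‖k + l‖ ^ 2 ≤ 2 * ε * ‖k + l‖ ^ 2 + 8 * ε ^ 2 := by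
  rw [abs_le] at hk hl hp hq
  have hpn : |((k - p) * conj (k + l)).re| ≤ 2 * ε := by
    rw [re_sub_mul_conj_add h, abs_le]
    constructor <;> linarith
  have hqn : |((k - q) * conj (k + l)).re| ≤ 2 * ε := by
    rw [re_sub_mul_conj_add (h.trans (add_comm p q)), abs_le]
    constructor <;> linarith
  have hpq : |((k - p) * conj (k + l) * conj ((k - q) * conj (k + l))).re| ≤
      2 * ε * ‖k + l‖ ^ 2 := by
    have : (k - p) * conj (k + l) * conj ((k - q) * conj (k + l)) =
        (k - p) * conj (k - q) * ((‖k + l‖ ^ 2 : ℝ) : ℂ) := by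
      rw [map_mul, mul_mul_mul_comm, conj_conj, conj_mul', ofReal_pow]
    rw [this, re_mul_ofReal, abs_mul, abs_of_nonneg (sq_nonneg ‖k + l‖), re_sub_mul_conj_sub h]
    gcongr
    rw [abs_le]
    constructor <;> linarith
  rw [show 8 * ε ^ 2 = 2 * (2 * ε) ^ 2 by ring]
  simpa only [norm_mul, norm_conj, mul_pow] using
    norm_sq_le_or_norm_sq_le_of_abs_re_le hpn hqn hpq

lemma abs_arg_sub_arg_le_of_norm_sub_le {z w : ℂ} {lam δ : ℝ} (hlam : 0 < lam)
    (hz : lam / 2 ≤ ‖z‖) (harg : |arg z - arg w| ≤ π / 2)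
    (hsub : ‖z - w‖ ≤ 8 * √(lam * δ)) :
    |arg z - arg w| ≤ 26 * √(δ / lam) := by
  have hsqrt : √(lam * δ) = lam * √(δ / lam) := by
    rw [show lam * δ = lam ^ 2 * (δ / lam) by field_simp, Real.sqrt_mul (sq_nonneg lam),
      Real.sqrt_sq hlam.le]
  have hmul : lam / 2 * |arg z - arg w| ≤ lam / 2 * (8 * π * √(δ / lam)) :=
    calc lam / 2 * |arg z - arg w| ≤ ‖z‖ * |arg z - arg w| := by gcongr
      _ ≤ π / 2 * ‖z - w‖ := norm_mul_abs_arg_sub_arg_le harg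
      _ ≤ π / 2 * (8 * (lam * √(δ / lam))) := by gcongr; rwa [← hsqrt]
      _ = lam / 2 * (8 * π * √(δ / lam)) := by ring
  calc |arg z - arg w| ≤ 8 * π * √(δ / lam) := le_of_mul_le_mul_left hmul (by positivity)
    _ ≤ 26 * √(δ / lam) := by gcongr; linarith [Real.pi_lt_d2]

lemma abs_sq_sub_sq_le_of_abs_sub_lt {x lam δ : ℝ} (hδ : δ ≤ lam / 2) (hx : |x - lam| < δ) :
    |x ^ 2 - lam ^ 2| ≤ 5 / 2 * (lam * δ) := by
  have hδ₀ : 0 ≤ δ := (abs_nonneg _).trans hx.le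
  have hadd : |x + lam| ≤ 5 / 2 * lam := by
    rw [abs_lt] at hx
    rw [abs_le]
    constructor <;> linarith
  calc |x ^ 2 - lam ^ 2| = |x + lam| * |x - lam| := by rw [sq_sub_sq, abs_mul]
    _ ≤ 5 / 2 * lam * δ := by gcongr; exact (abs_nonneg _).trans hadd
    _ = 5 / 2 * (lam * δ) := by ring

theorem abs_arg_sub_arg_le_or_of_add_eq_add {k l p q : ℂ} {lam δ : ℝ} (hlam : 0 < lam)
    (hsum : k + l = p + q) (hk : |‖k‖ - lam| < δ) (hl : |‖l‖ - lam| < δ) (hp : |‖p‖ - lam| < δ)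
    (hq : |‖q‖ - lam| < δ) (hkl : |arg k - arg l| ≤ π / 2) (hkp : |arg k - arg p| ≤ π / 2)
    (hkq : |arg k - arg q| ≤ π / 2) :
    |arg k - arg p| ≤ 26 * √(δ / lam) ∨ |arg k - arg q| ≤ 26 * √(δ / lam) := by
  have hδ : 0 < δ := (abs_nonneg _).trans_lt hk
  rcases lt_or_ge (lam / 2) δ with hthick | hthin
  · have hsqrt : 1 / 2 ≤ √(δ / lam) := by
      apply Real.le_sqrt_of_sq_le
      rw [le_div_iff₀ hlam]
      linarith
    exact .inl (hkp.trans (by linarith [Real.pi_lt_four]))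
  have hk_low : lam / 2 ≤ ‖k‖ := by linarith [(abs_lt.1 hk).1]
  have hl_low : lam / 2 ≤ ‖l‖ := by linarith [(abs_lt.1 hl).1]
  have hn : lam * δ ≤ ‖k + l‖ ^ 2 :=
    calc lam * δ ≤ lam * (lam / 2) := by gcongr
      _ = (lam / 2) ^ 2 + (lam / 2) ^ 2 := by ring
      _ ≤ ‖k‖ ^ 2 + ‖l‖ ^ 2 := by gcongr
      _ ≤ ‖k + l‖ ^ 2 := norm_sq_add_norm_sq_le_norm_add_sq hkl
  have hL : 0 < lam * δ := by positivity
  set L := lam * δ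
  have hclose {v : ℂ} (hv : ‖v‖ ^ 2 * ‖k + l‖ ^ 2 ≤
      2 * (5 / 2 * L) * ‖k + l‖ ^ 2 + 8 * (5 / 2 * L) ^ 2) : ‖v‖ ≤ 8 * √L := by
    have hle : ‖v‖ ^ 2 * ‖k + l‖ ^ 2 ≤ 8 ^ 2 * L * ‖k + l‖ ^ 2 := by
      linarith [mul_le_mul_of_nonneg_left hn hL.le, mul_pos hL (hL.trans_le hn)]
    refine abs_le_of_sq_le_sq ?_ (by positivity) |> (le_abs_self _).trans
    rw [mul_pow, Real.sq_sqrt hL.le]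
    exact le_of_mul_le_mul_right hle (hL.trans_le hn)
  exact (norm_sub_sq_le_or_of_add_eq_add hsum (abs_sq_sub_sq_le_of_abs_sub_lt hthin hk)
    (abs_sq_sub_sq_le_of_abs_sub_lt hthin hl) (abs_sq_sub_sq_le_of_abs_sub_lt hthin hp)
    (abs_sq_sub_sq_le_of_abs_sub_lt hthin hq)).imp
    (fun h ↦ abs_arg_sub_arg_le_of_norm_sub_le hlam hk_low hkp (hclose h))
    (fun h ↦ abs_arg_sub_arg_le_of_norm_sub_le hlam hk_low hkq (hclose h))

end PlaneGeometry

section Counting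

lemma addConvolution_le_card {G : Type*} [AddGroup G] [DecidableEq G] {A B U : Finset G} {n : G}
    (h : ∀ k ∈ A, ∀ l ∈ B, k + l = n → k ∈ U) : A.addConvolution B n ≤ #U := by
  refine card_le_card_of_injOn Prod.fst (fun x hx ↦ ?_) fun x hx y hy hxy ↦ ?_
  · obtain ⟨hmem, hadd⟩ := mem_filter.1 hx
    exact h _ (mem_product.1 hmem).1 _ (mem_product.1 hmem).2 hadd
  · have hadd : x.1 + x.2 = y.1 + y.2 := (mem_filter.1 hx).2.trans (mem_filter.1 hy).2.symm
    exact Prod.ext hxy (add_left_cancel (hxy ▸ hadd))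

lemma card_le_mul_of_card_floor_fiber_le {ι : Type*} {T : Finset ι} {φ : ι → ℝ} {u : ℝ}
    {m N : ℕ} (hφ : ∀ k ∈ T, φ k ∈ Set.Icc u (u + m)) (hN : ∀ j, #{k ∈ T | ⌊φ k⌋₊ = j} ≤ N) :
    #T ≤ N * (m + 1) := by
  have hfloor : ∀ k ∈ T, ⌊φ k⌋₊ ∈ Icc ⌊u⌋₊ (⌊u⌋₊ + m) := fun k hk ↦ by
    refine mem_Icc.2 ⟨Nat.floor_le_floor (hφ k hk).1, Nat.lt_succ_iff.1 ?_⟩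
    refine (Nat.floor_lt' (Nat.succ_ne_zero _)).2 ?_
    push_cast
    linarith [(hφ k hk).2, Nat.lt_floor_add_one u]
  have hcard := card_le_mul_card_image_of_maps_to hfloor N fun j _ ↦ hN j
  rwa [Nat.card_Icc, show ⌊u⌋₊ + m + 1 - ⌊u⌋₊ = m + 1 by lia] at hcard

/-- The lattice point `k ∈ ℤ²` as a complex number, so that `ang` becomes `Complex.arg` up to the
shift by `π`. -/
noncomputable def latticePt (k : ℤ × ℤ) : ℂ := k.1 + k.2 * I

lemma latticePt_add (k l : ℤ × ℤ) : latticePt (k + l) = latticePt k + latticePt l := by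
  simp only [latticePt, Prod.fst_add, Prod.snd_add, Int.cast_add]
  ring

lemma nrm2_ptR (k : ℤ × ℤ) : nrm2 (ptR k) = ‖latticePt k‖ := by
  simpa only [nrm2, ptR, latticePt, ofReal_intCast] using (norm_add_mul_I (k.1 : ℝ) (k.2 : ℝ)).symm

lemma ang_ptR (k : ℤ × ℤ) : ang (ptR k) = arg (latticePt k) + π := by
  simp only [ang, ptR, latticePt, ofReal_intCast]

lemma ang_ptR_nonneg (k : ℤ × ℤ) : 0 ≤ ang (ptR k) := by
  linarith [ang_ptR k, neg_pi_lt_arg (latticePt k)]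

lemma ang_ptR_le_two_pi (k : ℤ × ℤ) : ang (ptR k) ≤ 2 * π := by
  linarith [ang_ptR k, arg_le_pi (latticePt k)]

/-- The index of the angular sector `j * s ≤ ang x < (j + 1) * s` containing `k`. It is used with
`s = √(δ / λ)`, for the caps, and with `s = π / 2`. -/
noncomputable def sectorIndex (s : ℝ) (k : ℤ × ℤ) : ℕ := ⌊ang (ptR k) / s⌋₊

lemma sectorIndex_eq_iff {s : ℝ} (hs : 0 < s) {k : ℤ × ℤ} {j : ℕ} :
    sectorIndex s k = j ↔ j * s ≤ ang (ptR k) ∧ ang (ptR k) < (j + 1) * s := by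
  rw [sectorIndex, Nat.floor_eq_iff (div_nonneg (ang_ptR_nonneg k) hs.le), le_div_iff₀ hs,
    div_lt_iff₀ hs]

lemma abs_arg_sub_arg_le_of_sectorIndex_eq {s : ℝ} (hs : 0 < s) {k l : ℤ × ℤ}
    (h : sectorIndex s k = sectorIndex s l) : |arg (latticePt k) - arg (latticePt l)| ≤ s := by
  obtain ⟨hk_low, hk_high⟩ := (sectorIndex_eq_iff hs).1 h
  obtain ⟨hl_low, hl_high⟩ := (sectorIndex_eq_iff hs).1 (Eq.refl (sectorIndex s l))
  rw [ang_ptR] at hk_low hk_high hl_low hl_high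
  rw [abs_le]
  constructor <;> linarith

lemma sectorIndex_pi_div_two_mem_range (k : ℤ × ℤ) : sectorIndex (π / 2) k ∈ range 5 := by
  rw [mem_range, sectorIndex, Nat.floor_lt' (by simp), div_lt_iff₀ (by positivity)]
  push_cast
  linarith [ang_ptR_le_two_pi k, Real.pi_pos]

lemma card_abs_arg_sub_le {s : ℝ} (hs : 0 < s) {S : Finset (ℤ × ℤ)} {N : ℕ}
    (hN : ∀ j, #{k ∈ S | sectorIndex s k = j} ≤ N) (θ : ℝ) (m : ℕ) :
    #{k ∈ S | |arg (latticePt k) - θ| ≤ m * s} ≤ N * (2 * m + 1) := by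
  refine card_le_mul_of_card_floor_fiber_le (φ := fun k ↦ ang (ptR k) / s)
    (u := (θ + π) / s - m) (fun k hk ↦ ?_) fun j ↦ ?_
  · have hk' := abs_le.1 (mem_filter.1 hk).2
    rw [ang_ptR, Set.mem_Icc, sub_le_iff_le_add, div_add' _ _ _ hs.ne',
      div_le_div_iff_of_pos_right hs, div_le_iff₀ hs]
    push_cast
    rw [show ((θ + π) / s - m + 2 * m) * s = θ + π + m * s by field_simp; ring]
    constructor <;> linarith
  · exact (card_le_card (filter_subset_filter _ (filter_subset _ _))).trans (hN j)

lemma addConvolution_le_of_card_sectorIndex_le {S T : Finset (ℤ × ℤ)} {lam δ : ℝ} {N : ℕ}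
    (hlam : 0 < lam) (hδ : 0 < δ) (hT : T ⊆ S) (hnorm : ∀ k ∈ T, |‖latticePt k‖ - lam| < δ)
    (harg : ∀ k ∈ T, ∀ l ∈ T, |arg (latticePt k) - arg (latticePt l)| ≤ π / 2)
    (hN : ∀ j, #{k ∈ S | sectorIndex √(δ / lam) k = j} ≤ N) (n : ℤ × ℤ) :
    T.addConvolution T n ≤ 106 * N := by
  by_cases hn : n ∈ T + T
  swap
  · simp [addConvolution_eq_zero.2 hn]
  obtain ⟨p, hp, q, hq, rfl⟩ := mem_add.1 hn
  let near (c : ℤ × ℤ) : Finset (ℤ × ℤ) :=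
    {k ∈ S | |arg (latticePt k) - arg (latticePt c)| ≤ (26 : ℕ) * √(δ / lam)}
  have hnear (c : ℤ × ℤ) : #(near c) ≤ N * (2 * 26 + 1) :=
    card_abs_arg_sub_le (by positivity) hN _ 26
  have hsub : ∀ k ∈ T, ∀ l ∈ T, k + l = p + q → k ∈ near p ∪ near q := fun k hk l hl hkl ↦ by
    have hsum : latticePt k + latticePt l = latticePt p + latticePt q := by
      rw [← latticePt_add, hkl, latticePt_add]
    rw [mem_union, mem_filter, mem_filter, ← and_or_left]
    exact ⟨hT hk, mod_cast abs_arg_sub_arg_le_or_of_add_eq_add hlam hsum (hnorm k hk) (hnorm l hl)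
      (hnorm p hp) (hnorm q hq) (harg k hk l hl) (harg k hk p hp) (harg k hk q hq)⟩
  calc T.addConvolution T (p + q) ≤ #(near p ∪ near q) := addConvolution_le_card hsub
    _ ≤ #(near p) + #(near q) := card_union_le _ _
    _ ≤ 106 * N := by linarith [hnear p, hnear q]

end Counting

section Annulus

variable {S : Finset (ℤ × ℤ)} {lam δ : ℝ} {N : ℕ}

lemma card_sectorIndex_eq_le (hlam : 0 < lam) (hδ : 0 < δ)
    (hS : ∀ k ∈ S, lam - δ < nrm2 (ptR k) ∧ nrm2 (ptR k) < lam + δ)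
    (hN : ∀ j : ℕ, {k : ℤ × ℤ | k ∈ S ∧ k ∈ capPts lam δ j}.ncard ≤ N) (j : ℕ) :
    #{k ∈ S | sectorIndex √(δ / lam) k = j} ≤ N := by
  rw [← Set.ncard_coe_finset]
  convert hN j using 2
  ext k
  rw [coe_filter]
  exact and_congr_right fun hk ↦ (sectorIndex_eq_iff (by positivity)).trans
    (and_iff_right (hS k hk)).symm

theorem integral_norm_pow_four_le_of_annulus (hlam : 0 < lam) (hδ : 0 < δ)
    (hS : ∀ k ∈ S, lam - δ < nrm2 (ptR k) ∧ nrm2 (ptR k) < lam + δ)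
    (hN : ∀ j : ℕ, {k : ℤ × ℤ | k ∈ S ∧ k ∈ capPts lam δ j}.ncard ≤ N) (a : ℤ × ℤ → ℂ) :
    ∫ x in unitSq, ‖∑ k ∈ S, a k * torusChar k x‖ ^ 4 ≤
      11 ^ 4 * N * (∫ x in unitSq, ‖∑ k ∈ S, a k * torusChar k x‖ ^ 2) ^ 2 := by
  have hnorm : ∀ k ∈ S, |‖latticePt k‖ - lam| < δ := fun k hk ↦ by
    rw [← nrm2_ptR, abs_lt]
    constructor <;> linarith [(hS k hk).1, (hS k hk).2]
  have hconv : ∀ i ∈ range 5, ∀ n, addConvolution {k ∈ S | sectorIndex (π / 2) k = i}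
      {k ∈ S | sectorIndex (π / 2) k = i} n ≤ 106 * N := fun i _ ↦
    addConvolution_le_of_card_sectorIndex_le hlam hδ (filter_subset _ _)
      (fun k hk ↦ hnorm k (mem_filter.1 hk).1)
      (fun k hk l hl ↦ abs_arg_sub_arg_le_of_sectorIndex_eq (by positivity)
        ((mem_filter.1 hk).2.trans (mem_filter.1 hl).2.symm))
      (card_sectorIndex_eq_le hlam hδ hS hN)
  rw [isOrthonormalCharFamily_torusChar.integral_norm_sum_sq]
  calc ∫ x in unitSq, ‖∑ k ∈ S, a k * torusChar k x‖ ^ 4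
      ≤ #(range 5) ^ 3 * (106 * N : ℕ) * (∑ k ∈ S, ‖a k‖ ^ 2) ^ 2 :=
        isOrthonormalCharFamily_torusChar.integral_norm_sum_pow_four_le_of_fiberwise
          (fun k _ ↦ sectorIndex_pi_div_two_mem_range k) hconv a
    _ = 13250 * N * (∑ k ∈ S, ‖a k‖ ^ 2) ^ 2 := by
        rw [card_range]
        push_cast
        ring
    _ ≤ 11 ^ 4 * N * (∑ k ∈ S, ‖a k‖ ^ 2) ^ 2 := by
        gcongr
        norm_num

end Annulus

lemma rpow_one_div_four_le_of_le_pow_four_mul {c N X Y : ℝ} (hc : 0 ≤ c) (hN : 0 ≤ N)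
    (hX : 0 ≤ X) (hY : 0 ≤ Y) (h : X ≤ c ^ 4 * N * Y ^ 2) :
    X ^ ((1 : ℝ) / 4) ≤ c * N ^ ((1 : ℝ) / 4) * Y ^ ((1 : ℝ) / 2) :=
  calc X ^ ((1 : ℝ) / 4) ≤ (c ^ 4 * N * Y ^ 2) ^ ((1 : ℝ) / 4) := by gcongr
    _ = c * N ^ ((1 : ℝ) / 4) * Y ^ ((1 : ℝ) / 2) := by
      rw [Real.mul_rpow (by positivity) (by positivity), Real.mul_rpow (by positivity) hN,
        ← Real.rpow_natCast_mul hc, ← Real.rpow_natCast_mul hY]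
      norm_num

theorem stmt18_general {lam δ : ℝ} {N : ℕ} {S : Finset (ℤ × ℤ)} (a : ℤ × ℤ → ℂ)
    (hlam : 0 < lam) (hδ : 0 < δ)
    (hS : ∀ k ∈ S, lam - δ < nrm2 (ptR k) ∧ nrm2 (ptR k) < lam + δ)
    (hN : ∀ j : ℕ, {k : ℤ × ℤ | k ∈ S ∧ k ∈ capPts lam δ j}.ncard ≤ N) :
    (∫ x in unitSq,
        ‖∑ k ∈ S, a k * e₂ ((k.1 : ℝ) * x.1 + (k.2 : ℝ) * x.2)‖ ^ (4 : ℝ)) ^ ((1 : ℝ) / 4) ≤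
      11 * (N : ℝ) ^ ((1 : ℝ) / 4) *
        (∫ x in unitSq,
          ‖∑ k ∈ S, a k * e₂ ((k.1 : ℝ) * x.1 + (k.2 : ℝ) * x.2)‖ ^ (2 : ℝ)) ^ ((1 : ℝ) / 2) := by
  simp only [Real.rpow_ofNat]
  exact rpow_one_div_four_le_of_le_pow_four_mul (by norm_num) N.cast_nonneg
    (integral_nonneg fun x ↦ by positivity) (integral_nonneg fun x ↦ by positivity)
    (integral_norm_pow_four_le_of_annulus hlam hδ hS hN a)

/-- if `f` is a trigonometric polynomial on `𝕋²` with Fourier support `S`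
in the annulus `λ - δ < |k| < λ + δ` (with `λδ ≥ 1`) such that every cap contains at most
`N` points of `S`, then `‖f‖_{L⁴} ≤ C N^{1/4} ‖f‖_{L²}`. -/
theorem stmt18 :
    ∃ C : ℝ, 0 < C ∧
      ∀ (lam δ : ℝ) (N : ℕ) (S : Finset (ℤ × ℤ)) (a : ℤ × ℤ → ℂ),
        2 ≤ lam → 0 < δ → 1 ≤ lam * δ →
        (∀ k ∈ S, lam - δ < nrm2 (ptR k) ∧ nrm2 (ptR k) < lam + δ) →
        (∀ j : ℕ, {k : ℤ × ℤ | k ∈ S ∧ k ∈ capPts lam δ j}.ncard ≤ N) →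
        (∫ x in unitSq,
            ‖∑ k ∈ S, a k * e₂ ((k.1 : ℝ) * x.1 + (k.2 : ℝ) * x.2)‖ ^ (4 : ℝ)) ^ ((1 : ℝ) / 4) ≤
          C * (N : ℝ) ^ ((1 : ℝ) / 4) *
            (∫ x in unitSq,
              ‖∑ k ∈ S, a k * e₂ ((k.1 : ℝ) * x.1 + (k.2 : ℝ) * x.2)‖ ^ (2 : ℝ)) ^ ((1 : ℝ) / 2) :=
  ⟨11, by norm_num, fun _ _ _ _ a hlam hδ _ hS hN ↦
    stmt18_general a (by linarith) hδ hS hN⟩
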